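/- Let q : ℂ → ℂ be a Schwartz function. Then for every k ∈ ℂ there exists a unique pair (u₁, u₂) of bounded continuous functions ℂ → ℂ satisfying the integral equations u₁ = 1 + ∂̄⁻¹[ e_{−k} · q · conj(u₂) ] and u₂ = ∂̄⁻¹[ e_{−k} · q · conj(u₁) ] pointwise on ℂ; moreover u₁(z) → 1 and u₂(z) → 0 as |z| → ∞. -/

import Mathlib

open MeasureTheory Complex ComplexConjugate Filter Bornology
open scoped ENNReal Topology SchwartzMap

noncomputable section

/-- `e_k(z) = exp(i(conj k · z + k · conj z)/2)`. -/
def ek (k z : ℂ) : ℂ := Complex.exp (Complex.I * (conj k * z + k * conj z) / 2)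

/-- The solid Cauchy transform `∂̄⁻¹[h](z) = (1/π) ∫ h(w)/(z-w) dA(w)`. -/
def dbarInv (h : ℂ → ℂ) (z : ℂ) : ℂ := (Real.pi : ℂ)⁻¹ * ∫ w : ℂ, h w / (z - w)

/-- The solid Cauchy transform `∂_z⁻¹[h](z) = (1/π) ∫ h(w)/(conj z - conj w) dA(w)`. -/
def dzInv (h : ℂ → ℂ) (z : ℂ) : ℂ := (Real.pi : ℂ)⁻¹ * ∫ w : ℂ, h w / (conj z - conj w)

/-- The operator `S^k_q[F] = ∂̄⁻¹[e_{-k} q ∂_z⁻¹[e_k conj(q) F]]`. -/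
def Sk (k : ℂ) (q F : ℂ → ℂ) : ℂ → ℂ :=
  dbarInv fun z => ek (-k) z * q z * dzInv (fun w => ek k w * conj (q w) * F w) z

/-- The Fourier transform on `ℂ ≅ ℝ²`. -/
def FT (f : ℂ → ℂ) (ξ : ℂ) : ℂ :=
  ∫ z : ℂ, Complex.exp (-(2 * Real.pi * Complex.I) * ((z.re * ξ.re + z.im * ξ.im : ℝ) : ℂ)) * f z

/-- The inverse Fourier transform on `ℂ ≅ ℝ²`. -/
def FTinv (f : ℂ → ℂ) (x : ℂ) : ℂ :=
  ∫ ξ : ℂ, Complex.exp ((2 * Real.pi * Complex.I) * ((x.re * ξ.re + x.im * ξ.im : ℝ) : ℂ)) * f ξ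

/-- `D^s`, the Fourier multiplier with symbol `|ξ|^s`. -/
def Ds (s : ℝ) (f : ℂ → ℂ) : ℂ → ℂ :=
  FTinv fun ξ => ((‖ξ‖ ^ s : ℝ) : ℂ) * FT f ξ

/-- The weighted Sobolev norm
`‖q‖_{H^{s,s}} = max {‖q‖₂, ‖D^s q‖₂, ‖|·|^s q‖₂}`, where by Plancherel
`‖D^s q‖₂ = ‖ |ξ|^s (FT q)(ξ) ‖₂`. -/
def HssNorm (s : ℝ) (q : ℂ → ℂ) : ℝ≥0∞ :=
  max (eLpNorm q 2 volume)
    (max (eLpNorm (fun ξ : ℂ => ((‖ξ‖ ^ s : ℝ) : ℂ) * FT q ξ) 2 volume)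
      (eLpNorm (fun z : ℂ => ((‖z‖ ^ s : ℝ) : ℂ) * q z) 2 volume))

/-- The Cauchy–Riemann operator `∂̄ = (∂/∂z₁ + i ∂/∂z₂)/2`. -/
def dbar (G : ℂ → ℂ) (z : ℂ) : ℂ := (fderiv ℝ G z 1 + Complex.I * fderiv ℝ G z Complex.I) / 2

end

/-- `(u₁, u₂)` is a (bounded continuous) solution of the integral equations
`u₁ = 1 + ∂̄⁻¹[e_{-k} q conj u₂]`, `u₂ = ∂̄⁻¹[e_{-k} q conj u₁]`. -/
def IsScattering (q : ℂ → ℂ) (k : ℂ) (u₁ u₂ : ℂ → ℂ) : Prop :=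
  Continuous u₁ ∧ IsBounded (Set.range u₁) ∧ Continuous u₂ ∧ IsBounded (Set.range u₂) ∧
  (∀ z : ℂ, u₁ z = 1 + dbarInv (fun w => ek (-k) w * q w * conj (u₂ w)) z) ∧
  (∀ z : ℂ, u₂ z = dbarInv (fun w => ek (-k) w * q w * conj (u₁ w)) z)

/-!
With `a = e_{-k} q` and `T u = ∂̄⁻¹[a conj(u)]` the system reads `u₁ = 1 + T² u₁`, `u₂ = T u₁`, and
`1 - T²` is injective as soon as `1 - T` and `1 + T` are, the latter being `1 - T` for `-a`.

The kernel `w ↦ a(w) / (π (z - w))` is an `L¹`-valued continuous function of `z` that vanishes at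
infinity, hence continuous on the compact Riemann sphere, and Arzelà–Ascoli makes `T` compact; the
Fredholm alternative then turns injectivity of `1 - T²` into solvability.

As for `1 - T`, a bounded solution of `w = ∂̄⁻¹[a conj(w)]` also solves `w = ∂̄⁻¹[f w]` with
`f = a conj(w) / w`, and the generalized Liouville argument says that `w e^{-∂̄⁻¹f}` is entire and
vanishes at infinity. No derivative is needed for this: partial fractions give the Rota–Baxter
identity `∂̄⁻¹f · ∂̄⁻¹g = ∂̄⁻¹[f ∂̄⁻¹g + g ∂̄⁻¹f]`, which yields `∂̄⁻¹[f e^{∂̄⁻¹f}] = e^{∂̄⁻¹f} - 1`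
through the power series, and applied to `f w` and `-f e^{-∂̄⁻¹f}` it becomes `w e^{-∂̄⁻¹f} = 0`.
-/

open scoped BoundedContinuousFunction Nat

section Translation

variable {G 𝕜 : Type*} [AddGroup G] [MeasurableSpace G] [MeasurableAdd G] [MeasurableNeg G]
  [NormedRing 𝕜] {μ : Measure G} [μ.IsAddLeftInvariant] [μ.IsNegInvariant] {f k : G → 𝕜}

theorem integrable_mul_comp_sub_left (hf : MemLp f ∞ μ) (hk : Integrable k μ) (z : G) :
    Integrable (fun w => f w * k (z - w)) μ :=
  (hk.comp_sub_left z).mul_of_top_right hf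

theorem integral_norm_mul_comp_sub_left_le (hf : MemLp f ∞ μ) (hk : Integrable k μ) (z : G) :
    ∫ w, ‖f w * k (z - w)‖ ∂μ ≤ lpNorm f ∞ μ * ∫ t, ‖k t‖ ∂μ := by
  rw [← integral_sub_left_eq_self (fun t => ‖k t‖) μ z, ← integral_const_mul]
  refine integral_mono_ae (integrable_mul_comp_sub_left hf hk z).norm
    ((hk.norm.comp_sub_left z).const_mul _) ?_
  filter_upwards [ae_le_lpNorm_exponent_top hf] with w hw
  exact (norm_mul_le _ _).trans (by gcongr)

end Translation

theorem tendsto_toL1_of_dominated {α ι E : Type*} [MeasurableSpace α] [NormedAddCommGroup E]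
    {μ : Measure α} {l : Filter ι} [l.IsCountablyGenerated] {F : ι → α → E} {f : α → E}
    {bound : α → ℝ} (hF : ∀ i, Integrable (F i) μ) (hf : Integrable f μ)
    (hbound : Integrable bound μ) (h_bound : ∀ i, ∀ᵐ a ∂μ, ‖F i a‖ ≤ bound a)
    (h_lim : ∀ᵐ a ∂μ, Tendsto (fun i => F i a) l (𝓝 (f a))) :
    Tendsto (fun i => (hF i).toL1 (F i)) l (𝓝 (hf.toL1 f)) := by
  have hlim : Tendsto (fun i => ∫ a, ‖F i a - f a‖ ∂μ) l (𝓝 (∫ _, 0 ∂μ)) := by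
    refine tendsto_integral_filter_of_dominated_convergence (fun a => bound a + ‖f a‖)
      (.of_forall fun i => ((hF i).sub hf).norm.aestronglyMeasurable) (.of_forall fun i => ?_)
      (hbound.add hf.norm) ?_
    · filter_upwards [h_bound i] with a ha
      rw [norm_norm]
      exact (norm_sub_le _ _).trans (by gcongr)
    · filter_upwards [h_lim] with a ha
      exact tendsto_iff_norm_sub_tendsto_zero.1 ha
  rw [integral_zero] at hlim
  rw [tendsto_iff_norm_sub_tendsto_zero]
  refine hlim.congr fun i => ?_
  rw [← Integrable.toL1_sub, L1.norm_of_fun_eq_integral_norm]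
  rfl

/-- The fundamental solution `1 / (π t)` of `∂̄`. -/
noncomputable def dbarKernel (t : ℂ) : ℂ := (Real.pi * t)⁻¹

theorem dbarInv_eq_integral (h : ℂ → ℂ) (z : ℂ) :
    dbarInv h z = ∫ w, h w * dbarKernel (z - w) := by
  rw [dbarInv, ← integral_const_mul]
  refine integral_congr_ae (.of_forall fun w => ?_)
  simp only [dbarKernel]
  rw [mul_inv, div_eq_mul_inv]
  ring

theorem dbarInv_const_mul (c : ℂ) (h : ℂ → ℂ) (z : ℂ) :
    dbarInv (fun w => c * h w) z = c * dbarInv h z := by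
  simp only [dbarInv_eq_integral, mul_assoc, integral_const_mul]

theorem norm_dbarKernel_le (t : ℂ) : ‖dbarKernel t‖ ≤ ‖t‖⁻¹ := by
  rw [dbarKernel, norm_inv, norm_mul, Complex.norm_real, Real.norm_of_nonneg Real.pi_pos.le,
    mul_inv]
  exact mul_le_of_le_one_left (by positivity)
    (inv_le_one_of_one_le₀ (one_le_two.trans Real.two_le_pi))

theorem measurable_dbarKernel : Measurable dbarKernel := by
  unfold dbarKernel
  fun_prop

theorem continuousAt_dbarKernel {t : ℂ} (ht : t ≠ 0) : ContinuousAt dbarKernel t :=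
  (by fun_prop : ContinuousAt (fun t : ℂ => Real.pi * t) t).inv₀
    (mul_ne_zero (ofReal_ne_zero.2 Real.pi_ne_zero) ht)

theorem tendsto_dbarKernel_cobounded : Tendsto dbarKernel (cobounded ℂ) (𝓝 0) :=
  squeeze_zero_norm norm_dbarKernel_le (tendsto_inv_atTop_zero.comp tendsto_norm_cobounded_atTop)

/-- The singular part of `dbarKernel`, supported in the disc of radius `δ`. -/
noncomputable def dbarKernelNear (δ : ℝ) : ℂ → ℂ := (Metric.ball 0 δ).indicator dbarKernel

/-- The bounded part of `dbarKernel`, supported off the disc of radius `δ`. -/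
noncomputable def dbarKernelFar (δ : ℝ) : ℂ → ℂ := (Metric.ball 0 δ)ᶜ.indicator dbarKernel

theorem dbarKernelNear_add_dbarKernelFar (δ : ℝ) (t : ℂ) :
    dbarKernelNear δ t + dbarKernelFar δ t = dbarKernel t :=
  congrFun (Set.indicator_self_add_compl (Metric.ball 0 δ) dbarKernel) t

theorem integrable_dbarKernelNear (δ : ℝ) : Integrable (dbarKernelNear δ) := by
  have h : IntegrableOn dbarKernel (Metric.ball 0 δ) := by
    refine integrableOn_ball_of_norm_le_rpow (C := 1) (α := 1)
      (by simp [Complex.finrank_real_complex]) (by simp [Complex.finrank_real_complex])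
      (.of_forall fun t => ?_) measurable_dbarKernel.aestronglyMeasurable
    rw [one_mul, Real.rpow_neg_one]
    exact norm_dbarKernel_le t
  exact h.integrable_indicator measurableSet_ball

theorem tendsto_integral_norm_dbarKernelNear :
    Tendsto (fun δ => ∫ t, ‖dbarKernelNear δ t‖) (𝓝[>] 0) (𝓝 0) := by
  have hlim : Tendsto (fun δ => ∫ t, ‖dbarKernelNear δ t‖) (𝓝[>] 0) (𝓝 (∫ _ : ℂ, (0 : ℝ))) := by
    refine tendsto_integral_filter_of_dominated_convergence (fun t => ‖dbarKernelNear 1 t‖)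
      (.of_forall fun δ => (integrable_dbarKernelNear δ).norm.aestronglyMeasurable) ?_
      (integrable_dbarKernelNear 1).norm ?_
    · filter_upwards [Ioc_mem_nhdsGT one_pos] with δ hδ
      refine .of_forall fun t => ?_
      rw [norm_norm]
      exact norm_indicator_le_of_subset (Metric.ball_subset_ball hδ.2) _ _
    · filter_upwards [Measure.ae_ne volume 0] with t ht
      refine tendsto_const_nhds.congr' ?_
      filter_upwards [Ioo_mem_nhdsGT (norm_pos_iff.2 ht)] with δ hδ
      rw [dbarKernelNear, Set.indicator_of_notMem, norm_zero]
      simpa using hδ.2.le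
  rwa [integral_zero] at hlim

theorem measurable_dbarKernelFar (δ : ℝ) : Measurable (dbarKernelFar δ) :=
  measurable_dbarKernel.indicator measurableSet_ball.compl

theorem norm_dbarKernelFar_le {δ : ℝ} (hδ : 0 < δ) (t : ℂ) : ‖dbarKernelFar δ t‖ ≤ δ⁻¹ := by
  by_cases ht : t ∈ Metric.ball 0 δ
  · rw [dbarKernelFar, Set.indicator_of_notMem (Set.notMem_compl_iff.2 ht), norm_zero]
    positivity
  · rw [dbarKernelFar, Set.indicator_of_mem ht]
    rw [mem_ball_zero_iff, not_lt] at ht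
    exact (norm_dbarKernel_le t).trans (by gcongr)

theorem ae_continuousAt_dbarKernelFar {δ : ℝ} (hδ : 0 < δ) :
    ∀ᵐ t, ContinuousAt (dbarKernelFar δ) t := by
  have hsphere : ∀ᵐ t : ℂ, t ∉ Metric.sphere 0 δ :=
    measure_eq_zero_iff_ae_notMem.1 (Measure.addHaar_sphere volume 0 δ)
  filter_upwards [hsphere] with t ht
  refine ContinuousOn.continuousAt_indicator (fun s hs => ?_) ?_
  · refine (continuousAt_dbarKernel ?_).continuousWithinAt
    rintro rfl
    exact interior_subset hs (Metric.mem_ball_self hδ)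
  · rwa [frontier_compl, frontier_ball _ hδ.ne']

theorem tendsto_dbarKernelFar_cobounded (δ : ℝ) :
    Tendsto (dbarKernelFar δ) (cobounded ℂ) (𝓝 0) :=
  squeeze_zero_norm (fun _ => norm_indicator_le_norm_self _ _)
    (tendsto_norm_zero.comp tendsto_dbarKernel_cobounded)

/-- The integrable and essentially bounded functions, a class on which the solid Cauchy transform
converges absolutely at every point. -/
structure IsCauchyDensity (f : ℂ → ℂ) : Prop where
  integrable : Integrable f
  memLp_top : MemLp f ∞

/-- The integrand `w ↦ f(w) / (π (z - w))` of `∂̄⁻¹[f](z)`. -/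
noncomputable def cauchyKernel (f : ℂ → ℂ) (z w : ℂ) : ℂ := f w * dbarKernel (z - w)

theorem norm_mul_dbarKernelFar_le (f : ℂ → ℂ) {δ : ℝ} (hδ : 0 < δ) (z w : ℂ) :
    ‖f w * dbarKernelFar δ (z - w)‖ ≤ ‖f w‖ * δ⁻¹ := by
  rw [norm_mul]
  gcongr
  exact norm_dbarKernelFar_le hδ _

theorem cauchyKernel_eq_near_add_far (f : ℂ → ℂ) (δ : ℝ) (z : ℂ) :
    cauchyKernel f z =
      (fun w => f w * dbarKernelNear δ (z - w)) + fun w => f w * dbarKernelFar δ (z - w) := by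
  ext w
  rw [cauchyKernel, ← dbarKernelNear_add_dbarKernelFar δ, mul_add]
  rfl

theorem ae_cauchyKernel_mul_cauchyKernel (f g : ℂ → ℂ) (z : ℂ) : ∀ᵐ p : ℂ × ℂ,
    cauchyKernel f z p.1 * cauchyKernel g z p.2 =
      cauchyKernel f z p.1 * cauchyKernel g p.1 p.2 +
        cauchyKernel g z p.2 * cauchyKernel f p.2 p.1 := by
  have hdiag : ∀ᵐ p : ℂ × ℂ, p.1 ≠ p.2 :=
    (Measure.ae_prod_iff_ae_ae measurableSet_diagonal.compl).2
      (.of_forall fun w => (Measure.ae_ne volume w).mono fun _ => Ne.symm)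
  filter_upwards [Measure.quasiMeasurePreserving_fst.ae (Measure.ae_ne volume z),
    Measure.quasiMeasurePreserving_snd.ae (Measure.ae_ne volume z), hdiag] with p hp₁ hp₂ hp
  have h₁ : z - p.1 ≠ 0 := sub_ne_zero.2 hp₁.symm
  have h₂ : z - p.2 ≠ 0 := sub_ne_zero.2 hp₂.symm
  have h₁₂ : p.1 - p.2 ≠ 0 := sub_ne_zero.2 hp
  have h₂₁ : p.2 - p.1 ≠ 0 := sub_ne_zero.2 hp.symm
  have hπ : (Real.pi : ℂ) ≠ 0 := ofReal_ne_zero.2 Real.pi_ne_zero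
  simp only [cauchyKernel, dbarKernel]
  field_simp
  ring

namespace IsCauchyDensity

variable {f g : ℂ → ℂ}

theorem mul_memLp_top (hf : IsCauchyDensity f) (hg : MemLp g ∞) :
    IsCauchyDensity fun w => f w * g w :=
  ⟨hf.integrable.mul_of_top_left hg, hg.mul' hf.memLp_top⟩

theorem neg (hf : IsCauchyDensity f) : IsCauchyDensity fun w => -f w :=
  ⟨hf.integrable.neg, hf.memLp_top.neg⟩

theorem integrable_mul_dbarKernelNear (hf : IsCauchyDensity f) (δ : ℝ) (z : ℂ) :
    Integrable fun w => f w * dbarKernelNear δ (z - w) :=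
  integrable_mul_comp_sub_left hf.memLp_top (integrable_dbarKernelNear δ) z

theorem integrable_mul_dbarKernelFar (hf : IsCauchyDensity f) {δ : ℝ} (hδ : 0 < δ) (z : ℂ) :
    Integrable fun w => f w * dbarKernelFar δ (z - w) :=
  hf.integrable.mul_bdd
    ((measurable_dbarKernelFar δ).comp (measurable_const.sub measurable_id)).aestronglyMeasurable
    (.of_forall fun _ => norm_dbarKernelFar_le hδ _)

theorem integrable_cauchyKernel (hf : IsCauchyDensity f) (z : ℂ) :
    Integrable (cauchyKernel f z) := by
  rw [cauchyKernel_eq_near_add_far f 1]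
  exact (hf.integrable_mul_dbarKernelNear 1 z).add (hf.integrable_mul_dbarKernelFar one_pos z)

/-- The kernel `w ↦ cauchyKernel f z w` as an element of `L¹`. -/
noncomputable def kernelL1 (hf : IsCauchyDensity f) (z : ℂ) : ℂ →₁[volume] ℂ :=
  (hf.integrable_cauchyKernel z).toL1

/-- The contribution to `kernelL1` of the disc of radius `δ` about the singularity. -/
noncomputable def nearL1 (hf : IsCauchyDensity f) (δ : ℝ) (z : ℂ) : ℂ →₁[volume] ℂ :=
  (hf.integrable_mul_dbarKernelNear δ z).toL1

theorem kernelL1_sub_nearL1 (hf : IsCauchyDensity f) {δ : ℝ} (hδ : 0 < δ) (z : ℂ) :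
    hf.kernelL1 z - hf.nearL1 δ z = (hf.integrable_mul_dbarKernelFar hδ z).toL1 := by
  rw [sub_eq_iff_eq_add', kernelL1, nearL1, ← Integrable.toL1_add]
  exact (Integrable.toL1_eq_toL1_iff _ _ _ _).2 (.of_eq (cauchyKernel_eq_near_add_far f δ z))

theorem tendstoUniformly_kernelL1_sub_nearL1 (hf : IsCauchyDensity f) :
    TendstoUniformly (fun δ z => hf.kernelL1 z - hf.nearL1 δ z) hf.kernelL1 (𝓝[>] 0) := by
  have hnear (δ : ℝ) (z : ℂ) :
      ‖hf.nearL1 δ z‖ ≤ lpNorm f ∞ volume * ∫ t, ‖dbarKernelNear δ t‖ := by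
    rw [nearL1, L1.norm_of_fun_eq_integral_norm]
    exact integral_norm_mul_comp_sub_left_le hf.memLp_top (integrable_dbarKernelNear δ) z
  have hlim := tendsto_integral_norm_dbarKernelNear.const_mul (lpNorm f ∞ volume)
  rw [mul_zero] at hlim
  rw [Metric.tendstoUniformly_iff]
  intro ε hε
  filter_upwards [hlim.eventually (gt_mem_nhds hε)] with δ hδ z
  rw [dist_eq_norm, sub_sub_cancel]
  exact (hnear δ z).trans_lt hδ

theorem continuous_kernelL1_sub_nearL1 (hf : IsCauchyDensity f) {δ : ℝ} (hδ : 0 < δ) :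
    Continuous fun z => hf.kernelL1 z - hf.nearL1 δ z := by
  simp only [hf.kernelL1_sub_nearL1 hδ]
  refine continuous_iff_continuousAt.2 fun z => tendsto_toL1_of_dominated
    (hf.integrable_mul_dbarKernelFar hδ) (hf.integrable_mul_dbarKernelFar hδ z)
    (hf.integrable.norm.mul_const δ⁻¹) (fun y => .of_forall (norm_mul_dbarKernelFar_le f hδ y)) ?_
  filter_upwards [(quasiMeasurePreserving_sub_left volume z).ae
    (ae_continuousAt_dbarKernelFar hδ)] with w hw
  exact (hw.tendsto.comp (tendsto_id.sub_const w)).const_mul (f w)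

theorem tendsto_kernelL1_sub_nearL1 (hf : IsCauchyDensity f) {δ : ℝ} (hδ : 0 < δ) :
    Tendsto (fun z => hf.kernelL1 z - hf.nearL1 δ z) (cobounded ℂ) (𝓝 0) := by
  have : (cobounded ℂ).IsCountablyGenerated := comap_norm_atTop (E := ℂ) ▸ inferInstance
  simp only [hf.kernelL1_sub_nearL1 hδ]
  rw [← Integrable.toL1_zero (integrable_zero ℂ ℂ volume)]
  refine tendsto_toL1_of_dominated (hf.integrable_mul_dbarKernelFar hδ) (integrable_zero ℂ ℂ volume)
    (hf.integrable.norm.mul_const δ⁻¹) (fun y => .of_forall (norm_mul_dbarKernelFar_le f hδ y))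
    (.of_forall fun w => ?_)
  simpa using ((tendsto_dbarKernelFar_cobounded δ).comp
    (tendsto_sub_const_cobounded w)).const_mul (f w)

theorem continuous_kernelL1 (hf : IsCauchyDensity f) : Continuous hf.kernelL1 :=
  hf.tendstoUniformly_kernelL1_sub_nearL1.continuous <| Eventually.frequently <|
    eventually_mem_nhdsWithin.mono fun _ => hf.continuous_kernelL1_sub_nearL1

theorem tendsto_kernelL1_cocompact (hf : IsCauchyDensity f) :
    Tendsto hf.kernelL1 (cocompact ℂ) (𝓝 0) := by
  rw [← Metric.cobounded_eq_cocompact]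
  exact hf.tendstoUniformly_kernelL1_sub_nearL1.tendsto_of_eventually_tendsto
    (eventually_mem_nhdsWithin.mono fun _ => hf.tendsto_kernelL1_sub_nearL1)
    tendsto_const_nhds

/-- `kernelL1` extended by `0` to a continuous function on the Riemann sphere. -/
noncomputable def sphereKernel (hf : IsCauchyDensity f) : OnePoint ℂ →ᵇ (ℂ →₁[volume] ℂ) :=
  .mkOfCompact <| OnePoint.continuousMapMk ⟨hf.kernelL1, hf.continuous_kernelL1⟩ 0
    (coclosedCompact_eq_cocompact (X := ℂ) ▸ hf.tendsto_kernelL1_cocompact)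

theorem integral_norm_cauchyKernel_le (hf : IsCauchyDensity f) (z : ℂ) :
    ∫ w, ‖cauchyKernel f z w‖ ≤ ‖hf.sphereKernel‖ := by
  rw [← L1.norm_of_fun_eq_integral_norm (hf.integrable_cauchyKernel z)]
  exact hf.sphereKernel.norm_coe_le_norm z

theorem dbarInv_eq_integral_kernelL1 (hf : IsCauchyDensity f) :
    dbarInv f = fun z => L1.integral (hf.kernelL1 z) := by
  ext z
  rw [dbarInv_eq_integral, kernelL1, ← integral_eq]
  rfl

theorem continuous_dbarInv (hf : IsCauchyDensity f) : Continuous (dbarInv f) := by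
  rw [hf.dbarInv_eq_integral_kernelL1]
  exact L1.continuous_integral.comp hf.continuous_kernelL1

theorem tendsto_dbarInv_cocompact (hf : IsCauchyDensity f) :
    Tendsto (dbarInv f) (cocompact ℂ) (𝓝 0) := by
  rw [hf.dbarInv_eq_integral_kernelL1, ← L1.integral_zero ℂ ℂ]
  exact (L1.continuous_integral.tendsto 0).comp hf.tendsto_kernelL1_cocompact

theorem norm_dbarInv_le (hf : IsCauchyDensity f) (z : ℂ) : ‖dbarInv f z‖ ≤ ‖hf.sphereKernel‖ := by
  rw [dbarInv_eq_integral]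
  exact (norm_integral_le_integral_norm _).trans (hf.integral_norm_cauchyKernel_le z)

theorem memLp_top_comp_dbarInv (hf : IsCauchyDensity f) {ψ : ℂ → ℂ} (hψ : Continuous ψ) :
    MemLp (fun w => ψ (dbarInv f w)) ∞ := by
  obtain ⟨C, hC⟩ := (isCompact_closedBall (0 : ℂ) ‖hf.sphereKernel‖).exists_bound_of_continuousOn
    hψ.continuousOn
  exact memLp_top_of_bound (hψ.comp hf.continuous_dbarInv).aestronglyMeasurable C
    (.of_forall fun w => hC _ (mem_closedBall_zero_iff.2 (hf.norm_dbarInv_le w)))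

theorem memLp_top_dbarInv (hf : IsCauchyDensity f) : MemLp (dbarInv f) ∞ :=
  hf.memLp_top_comp_dbarInv continuous_id

theorem dbarInv_add (hf : IsCauchyDensity f) (hg : IsCauchyDensity g) (z : ℂ) :
    dbarInv (fun w => f w + g w) z = dbarInv f z + dbarInv g z := by
  simp only [dbarInv_eq_integral, add_mul]
  exact integral_add (hf.integrable_cauchyKernel z) (hg.integrable_cauchyKernel z)

theorem integrable_cauchyKernel_mul_cauchyKernel (hf : IsCauchyDensity f) (hg : IsCauchyDensity g)
    (z : ℂ) :
    Integrable fun p : ℂ × ℂ => cauchyKernel f z p.1 * cauchyKernel g p.1 p.2 := by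
  have hinner (w : ℂ) : ∫ v, ‖cauchyKernel f z w * cauchyKernel g w v‖ ≤
      ‖cauchyKernel f z w‖ * ‖hg.sphereKernel‖ := by
    simp only [norm_mul, integral_const_mul]
    gcongr
    exact hg.integral_norm_cauchyKernel_le w
  have hmeas : AEStronglyMeasurable
      fun p : ℂ × ℂ => cauchyKernel f z p.1 * cauchyKernel g p.1 p.2 :=
    (hf.integrable_cauchyKernel z).1.comp_fst.mul <| hg.integrable.1.comp_snd.mul
      (measurable_dbarKernel.comp (measurable_fst.sub measurable_snd)).aestronglyMeasurable
  refine (integrable_prod_iff hmeas).2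
    ⟨.of_forall fun w => (hg.integrable_cauchyKernel w).const_mul (cauchyKernel f z w), ?_⟩
  refine ((hf.integrable_cauchyKernel z).norm.mul_const ‖hg.sphereKernel‖).mono'
    hmeas.norm.integral_prod_right' (.of_forall fun w => ?_)
  rw [Real.norm_of_nonneg (integral_nonneg fun _ => norm_nonneg _)]
  exact hinner w

theorem integral_cauchyKernel_mul_cauchyKernel (hf : IsCauchyDensity f) (hg : IsCauchyDensity g)
    (z : ℂ) :
    ∫ p : ℂ × ℂ, cauchyKernel f z p.1 * cauchyKernel g p.1 p.2 =
      dbarInv (fun w => f w * dbarInv g w) z := by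
  rw [Measure.volume_eq_prod, integral_prod _ (hf.integrable_cauchyKernel_mul_cauchyKernel hg z),
    dbarInv_eq_integral]
  refine integral_congr_ae (.of_forall fun w => ?_)
  simp only [integral_const_mul, dbarInv_eq_integral g, cauchyKernel]
  ring

theorem dbarInv_mul_dbarInv (hf : IsCauchyDensity f) (hg : IsCauchyDensity g) (z : ℂ) :
    dbarInv f z * dbarInv g z =
      dbarInv (fun w => f w * dbarInv g w + g w * dbarInv f w) z := by
  have hswap : Integrable fun p : ℂ × ℂ => cauchyKernel g z p.2 * cauchyKernel f p.2 p.1 :=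
    (hg.integrable_cauchyKernel_mul_cauchyKernel hf z).swap
  have hmul : dbarInv f z * dbarInv g z =
      ∫ p : ℂ × ℂ, cauchyKernel f z p.1 * cauchyKernel g z p.2 := by
    rw [dbarInv_eq_integral, dbarInv_eq_integral]
    exact (integral_prod_mul _ _).symm
  rw [hmul, integral_congr_ae (ae_cauchyKernel_mul_cauchyKernel f g z),
    integral_add (hf.integrable_cauchyKernel_mul_cauchyKernel hg z) hswap,
    hf.integral_cauchyKernel_mul_cauchyKernel hg,
    dbarInv_add (hf.mul_memLp_top hg.memLp_top_dbarInv) (hg.mul_memLp_top hf.memLp_top_dbarInv),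
    ← hg.integral_cauchyKernel_mul_cauchyKernel hf]
  congr 1
  exact integral_prod_swap fun p : ℂ × ℂ => cauchyKernel g z p.1 * cauchyKernel f p.1 p.2

theorem dbarInv_mul_dbarInv_pow_div_factorial (hf : IsCauchyDensity f) (n : ℕ) (z : ℂ) :
    dbarInv (fun w => f w * (dbarInv f w ^ n / n !)) z = dbarInv f z ^ (n + 1) / (n + 1)! := by
  induction n generalizing z with
  | zero => simp
  | succ n ih =>
    have hfn := hf.mul_memLp_top
      (hf.memLp_top_comp_dbarInv (ψ := fun s => s ^ n / n !) (by fun_prop))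
    have hRB := hf.dbarInv_mul_dbarInv hfn z
    simp only [ih] at hRB
    have hsum : (fun w => f w * (dbarInv f w ^ (n + 1) / (n + 1)!) +
        f w * (dbarInv f w ^ n / n !) * dbarInv f w) =
        fun w => (n + 2) * (f w * (dbarInv f w ^ (n + 1) / (n + 1)!)) := by
      ext w
      rw [Nat.factorial_succ]
      push_cast
      field_simp
      ring
    rw [hsum, dbarInv_const_mul] at hRB
    have hn : (n + 2 : ℂ) ≠ 0 := mod_cast (n + 1).succ_ne_zero
    refine mul_left_cancel₀ hn (hRB.symm.trans ?_)
    have hfact : ((n + 1 + 1)! : ℂ) = (n + 2) * (n + 1)! := by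
      rw [Nat.factorial_succ]
      push_cast
      ring
    rw [hfact]
    field_simp
    ring

theorem dbarInv_mul_exp_dbarInv (hf : IsCauchyDensity f) (z : ℂ) :
    dbarInv (fun w => f w * cexp (dbarInv f w)) z = cexp (dbarInv f z) - 1 := by
  have hexp (s : ℂ) : HasSum (fun n : ℕ => s ^ n / n !) (cexp s) := by
    rw [Complex.exp_eq_exp_ℂ]
    exact NormedSpace.expSeries_div_hasSum_exp s
  have hterm : HasSum (fun n : ℕ => dbarInv (fun w => f w * (dbarInv f w ^ n / n !)) z)
      (dbarInv (fun w => f w * cexp (dbarInv f w)) z) := by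
    simp only [dbarInv_eq_integral _ z]
    refine hasSum_integral_of_dominated_convergence
      (fun n w => ‖cauchyKernel f z w‖ * (‖hf.sphereKernel‖ ^ n / n !)) (fun n => ?_)
      (fun n => .of_forall fun w => ?_)
      (.of_forall fun w => (Real.summable_pow_div_factorial _).mul_left _) ?_
      (.of_forall fun w => ((hexp (dbarInv f w)).mul_left (f w)).mul_right _)
    · exact ((hf.mul_memLp_top (hf.memLp_top_comp_dbarInv
        (ψ := fun s => s ^ n / n !) (by fun_prop))).integrable_cauchyKernel z).1
    · rw [mul_right_comm, norm_mul, norm_div, norm_pow, Complex.norm_natCast]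
      gcongr
      exacts [le_rfl, hf.norm_dbarInv_le w]
    · simp only [tsum_mul_left]
      exact (hf.integrable_cauchyKernel z).norm.mul_const _
  simp only [hf.dbarInv_mul_dbarInv_pow_div_factorial] at hterm
  refine hterm.unique ?_
  simpa using (hasSum_nat_add_iff' 1).2 (hexp (dbarInv f z))

theorem eq_zero_of_eq_dbarInv_mul (hf : IsCauchyDensity f) {w : ℂ → ℂ} (hw : MemLp w ∞)
    (h : ∀ z, w z = dbarInv (fun v => f v * w v) z) : w = 0 := by
  set e : ℂ → ℂ := fun z => cexp (dbarInv (fun v => -f v) z)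
  have he1 (z : ℂ) : dbarInv (fun v => -f v * e v) z = e z - 1 := hf.neg.dbarInv_mul_exp_dbarInv z
  have hfe : IsCauchyDensity fun v => -f v * e v :=
    hf.neg.mul_memLp_top (hf.neg.memLp_top_comp_dbarInv Complex.continuous_exp)
  ext z
  have hRB := (hf.mul_memLp_top hw).dbarInv_mul_dbarInv hfe z
  simp only [← h, he1] at hRB
  have hcancel : (fun v => f v * w v * (e v - 1) + -f v * e v * w v) =
      fun v => -1 * (f v * w v) := by
    ext v
    ring
  rw [hcancel, dbarInv_const_mul, ← h] at hRB
  have hprod : w z * e z = 0 := by linear_combination hRB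
  exact (mul_eq_zero.1 hprod).resolve_right (Complex.exp_ne_zero _)

theorem eq_zero_of_eq_dbarInv_mul_conj (hf : IsCauchyDensity f) {w : ℂ → ℂ} (hw : MemLp w ∞)
    (h : ∀ z, w z = dbarInv (fun v => f v * conj (w v)) z) : w = 0 := by
  have hphase : MemLp (fun v => conj (w v) / w v) ∞ := by
    refine memLp_top_of_bound ?_ 1 (.of_forall fun v => ?_)
    · exact ((Complex.continuous_conj.measurable.comp_aemeasurable hw.1.aemeasurable).div
        hw.1.aemeasurable).aestronglyMeasurable
    · rw [norm_div, RCLike.norm_conj]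
      exact div_self_le_one _
  refine (hf.mul_memLp_top hphase).eq_zero_of_eq_dbarInv_mul hw fun z => ?_
  rw [h z]
  congr 1 with v
  rcases eq_or_ne (w v) 0 with hv | hv
  · simp [hv]
  · field_simp

end IsCauchyDensity


section Compactness

variable {X 𝕜 E F : Type*} [TopologicalSpace X] [CompactSpace X] [NontriviallyNormedField 𝕜]
  [NormedAddCommGroup E] [NormedSpace 𝕜 E] [NormedAddCommGroup F] [NormedSpace 𝕜 F]

/-- The operator `L ↦ L ∘ K` evaluating continuous linear maps along a bounded continuous family
`K` of vectors. -/
noncomputable def evalAlong (K : X →ᵇ E) : (E →L[𝕜] F) →L[𝕜] (X →ᵇ F) :=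
  LinearMap.mkContinuous
    { toFun := fun L => L.compLeftContinuousBounded X K
      map_add' := fun _ _ => rfl
      map_smul' := fun _ _ => rfl } ‖K‖ fun L => by
    rw [mul_comm]
    exact (BoundedContinuousFunction.norm_le (by positivity)).2 fun x =>
      L.le_of_opNorm_le_of_le le_rfl (K.norm_coe_le_norm x)

theorem isCompactOperator_evalAlong [ProperSpace F] (K : X →ᵇ E) :
    IsCompactOperator (evalAlong (𝕜 := 𝕜) (F := F) K) := by
  have hbound (L : E →L[𝕜] F) (hL : L ∈ Metric.closedBall 0 1) (v : E) : ‖L v‖ ≤ ‖v‖ := by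
    simpa using L.le_of_opNorm_le (mem_closedBall_zero_iff.1 hL) v
  refine (isCompactOperator_iff_isCompact_closure_image_closedBall
    (evalAlong (𝕜 := 𝕜) (F := F) K).toLinearMap one_pos).2 ?_
  refine BoundedContinuousFunction.arzela_ascoli (Metric.closedBall 0 ‖K‖)
    (isCompact_closedBall 0 _) _ ?_ fun x => ?_
  · rintro _ x ⟨L, hL, rfl⟩
    exact mem_closedBall_zero_iff.2 ((hbound L hL _).trans (K.norm_coe_le_norm x))
  · refine Metric.equicontinuousAt_of_continuity_modulus (fun y => ‖K x - K y‖) ?_ _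
      (.of_forall ?_)
    · have h : Continuous fun y => ‖K x - K y‖ := by fun_prop
      simpa using h.tendsto x
    · rintro y ⟨_, L, hL, rfl⟩
      rw [dist_eq_norm]
      exact (congrArg norm (L.map_sub (K x) (K y))).symm.le.trans (hbound L hL _)

end Compactness

theorem existsUnique_eq_add_of_isCompactOperator {𝕜 E : Type*} [NontriviallyNormedField 𝕜]
    [NormedAddCommGroup E] [NormedSpace 𝕜 E] [CompleteSpace E] {T : E →L[𝕜] E}
    (hT : IsCompactOperator T) (hfix : ∀ x, T x = x → x = 0) (y : E) : ∃! x, x = y + T x := by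
  have hres : (1 : 𝕜) ∈ resolventSet 𝕜 T := by
    refine (hT.hasEigenvalue_or_mem_resolventSet one_ne_zero).resolve_left fun h => ?_
    obtain ⟨x, hx⟩ := h.exists_hasEigenvector
    exact hx.2 (hfix x (by simpa using hx.apply_eq_smul))
  rw [spectrum.mem_resolventSet_iff, ContinuousLinearMap.isUnit_iff_bijective] at hres
  simpa [sub_eq_iff_eq_add] using hres.existsUnique y

theorem eq_zero_of_apply_apply_eq_self {E F : Type*} [AddCommGroup E] [FunLike F E E]
    [AddMonoidHomClass F E E] (T : F) (hfix : ∀ x, T x = x → x = 0)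
    (hanti : ∀ x, T x = -x → x = 0) {x : E} (hx : T (T x) = x) : x = 0 :=
  hanti x <| eq_neg_of_add_eq_zero_left <| hfix _ <| by rw [map_add, hx, add_comm]

section ToLpTop

variable {X 𝕜 E : Type*} [TopologicalSpace X] [MeasurableSpace X] [BorelSpace X] [NormedField 𝕜]
  [NormedAddCommGroup E] [NormedSpace 𝕜 E] [SecondCountableTopologyEither X E]

/-- The inclusion of the bounded continuous functions in `L^∞`. -/
noncomputable def boundedContinuousToLpTop (μ : Measure X) : (X →ᵇ E) →L[𝕜] Lp E ∞ μ :=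
  LinearMap.mkContinuous
    { toFun := fun u => (BoundedContinuousFunction.memLp_top (μ := μ) u).toLp u
      map_add' := fun _ _ => rfl
      map_smul' := fun _ _ => rfl } 1 fun u => by
    rw [one_mul]
    refine (Lp.norm_toLp u u.memLp_top).trans_le ?_
    rw [eLpNorm_exponent_top]
    exact ENNReal.toReal_le_of_le_ofReal (norm_nonneg _)
      (eLpNormEssSup_le_of_ae_bound (.of_forall u.norm_coe_le_norm))

theorem coeFn_boundedContinuousToLpTop (μ : Measure X) (u : X →ᵇ E) :
    boundedContinuousToLpTop (𝕜 := 𝕜) μ u =ᵐ[μ] u :=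
  u.memLp_top.coeFn_toLp

end ToLpTop

/-- The pairing `(u, g) ↦ ∫ conj(u) g` of bounded continuous functions with `L¹`. -/
noncomputable def conjPairing : (ℂ →ᵇ ℂ) →L[ℝ] (ℂ →₁[volume] ℂ) →L[ℝ] ℂ :=
  ContinuousLinearMap.lpPairing volume ∞ 1
    ((ContinuousLinearMap.mul ℝ ℂ) ∘L (conjCLE : ℂ →L[ℝ] ℂ)) ∘L boundedContinuousToLpTop volume

theorem conjPairing_apply (u : ℂ →ᵇ ℂ) (g : ℂ →₁[volume] ℂ) :
    conjPairing u g = ∫ v, conj (u v) * g v := by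
  refine (ContinuousLinearMap.lpPairing_eq_integral _ _ g).trans (integral_congr_ae ?_)
  filter_upwards [coeFn_boundedContinuousToLpTop (𝕜 := ℝ) volume u] with v hu
  exact congrArg (fun s => conj s * g v) hu

namespace IsCauchyDensity

variable {a : ℂ → ℂ}

theorem mul_conj (ha : IsCauchyDensity a) (u : ℂ →ᵇ ℂ) :
    IsCauchyDensity fun v => a v * conj (u v) :=
  ha.mul_memLp_top <| memLp_top_of_bound (by fun_prop) ‖u‖ <| .of_forall fun v => by
    simpa using u.norm_coe_le_norm v

/-- The real-linear operator `u ↦ ∂̄⁻¹[a conj(u)]` on bounded continuous functions, written as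
evaluation along `sphereKernel` after the pairing of `L^∞` with `L¹`. -/
noncomputable def conjOperator (ha : IsCauchyDensity a) : (ℂ →ᵇ ℂ) →L[ℝ] (ℂ →ᵇ ℂ) :=
  BoundedContinuousFunction.compContinuousCLM ℂ ℝ
      (⟨(↑), OnePoint.continuous_coe⟩ : C(ℂ, OnePoint ℂ))
    ∘L evalAlong ha.sphereKernel ∘L conjPairing

theorem conjOperator_apply (ha : IsCauchyDensity a) (u : ℂ →ᵇ ℂ) (z : ℂ) :
    ha.conjOperator u z = dbarInv (fun v => a v * conj (u v)) z := by
  refine (conjPairing_apply u (ha.kernelL1 z)).trans ?_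
  rw [dbarInv_eq_integral]
  refine integral_congr_ae ?_
  filter_upwards [(ha.integrable_cauchyKernel z).coeFn_toL1] with v hK
  rw [kernelL1, hK, cauchyKernel]
  ring

theorem isCompactOperator_conjOperator (ha : IsCauchyDensity a) :
    IsCompactOperator ha.conjOperator :=
  ((isCompactOperator_evalAlong (𝕜 := ℝ) (F := ℂ) ha.sphereKernel).comp_clm conjPairing).clm_comp
    (BoundedContinuousFunction.compContinuousCLM ℂ ℝ _)

theorem tendsto_conjOperator_cocompact (ha : IsCauchyDensity a) (u : ℂ →ᵇ ℂ) :
    Tendsto (ha.conjOperator u) (cocompact ℂ) (𝓝 0) :=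
  (ha.mul_conj u).tendsto_dbarInv_cocompact.congr fun z => (ha.conjOperator_apply u z).symm

theorem eq_zero_of_conjOperator_eq_self (ha : IsCauchyDensity a) {u : ℂ →ᵇ ℂ}
    (hu : ha.conjOperator u = u) : u = 0 :=
  DFunLike.coe_injective <| ha.eq_zero_of_eq_dbarInv_mul_conj u.memLp_top fun z => by
    rw [← ha.conjOperator_apply, hu]

theorem conjOperator_neg (ha : IsCauchyDensity a) : ha.neg.conjOperator = -ha.conjOperator := by
  ext u z
  have h := dbarInv_const_mul (-1) (fun v => a v * conj (u v)) z
  simp only [← ha.conjOperator_apply, ← mul_assoc, neg_one_mul] at h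
  exact (ha.neg.conjOperator_apply u z).trans h

theorem eq_zero_of_conjOperator_eq_neg (ha : IsCauchyDensity a) {u : ℂ →ᵇ ℂ}
    (hu : ha.conjOperator u = -u) : u = 0 :=
  ha.neg.eq_zero_of_conjOperator_eq_self <| by
    rw [ha.conjOperator_neg, neg_apply, hu, neg_neg]

theorem existsUnique_eq_one_add_conjOperator_conjOperator (ha : IsCauchyDensity a) :
    ∃! u, u = 1 + ha.conjOperator (ha.conjOperator u) :=
  existsUnique_eq_add_of_isCompactOperator (T := ha.conjOperator ∘L ha.conjOperator)
    (ha.isCompactOperator_conjOperator.clm_comp ha.conjOperator)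
    (fun _ => eq_zero_of_apply_apply_eq_self ha.conjOperator
      (fun _ => ha.eq_zero_of_conjOperator_eq_self) fun _ => ha.eq_zero_of_conjOperator_eq_neg) 1

end IsCauchyDensity

theorem continuous_ek (k : ℂ) : Continuous (ek k) := by
  unfold ek
  fun_prop

theorem norm_ek (k z : ℂ) : ‖ek k z‖ = 1 := by
  have hre : (I * (conj k * z + k * conj z) / 2).re = 0 := by
    simp only [div_ofNat_re, I_mul_re, add_im, mul_im, conj_re, conj_im]
    ring
  rw [ek, Complex.norm_exp, hre, Real.exp_zero]

theorem isCauchyDensity_ek_mul {q : ℂ → ℂ} (hq : IsCauchyDensity q) (k : ℂ) :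
    IsCauchyDensity fun w => ek k w * q w := by
  simp only [mul_comm (ek k _)]
  exact hq.mul_memLp_top <| memLp_top_of_bound (continuous_ek k).aestronglyMeasurable 1 <|
    .of_forall fun w => (norm_ek k w).le

theorem isScattering_iff {q : ℂ → ℂ} {k : ℂ} (ha : IsCauchyDensity fun w => ek (-k) w * q w)
    {v₁ v₂ : ℂ → ℂ} : IsScattering q k v₁ v₂ ↔
      ∃ u, u = 1 + ha.conjOperator (ha.conjOperator u) ∧ u = v₁ ∧ ha.conjOperator u = v₂ := by
  constructor
  · rintro ⟨hc₁, hb₁, hc₂, hb₂, h₁, h₂⟩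
    obtain ⟨u₁, rfl⟩ : ∃ u : ℂ →ᵇ ℂ, u = v₁ := ⟨⟨⟨v₁, hc₁⟩, Metric.isBounded_range_iff.1 hb₁⟩, rfl⟩
    obtain ⟨u₂, rfl⟩ : ∃ u : ℂ →ᵇ ℂ, u = v₂ := ⟨⟨⟨v₂, hc₂⟩, Metric.isBounded_range_iff.1 hb₂⟩, rfl⟩
    simp only [← ha.conjOperator_apply] at h₁ h₂
    have h : ha.conjOperator u₁ = u₂ := BoundedContinuousFunction.ext fun z => (h₂ z).symm
    exact ⟨u₁, BoundedContinuousFunction.ext (h ▸ h₁), rfl, congrArg _ h⟩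
  · rintro ⟨u, hu, rfl, rfl⟩
    refine ⟨u.continuous, u.isBounded_range, (ha.conjOperator u).continuous,
      (ha.conjOperator u).isBounded_range, fun z => ?_, ha.conjOperator_apply u⟩
    rw [← ha.conjOperator_apply]
    exact DFunLike.congr_fun hu z

theorem stmt13_general {q : ℂ → ℂ} (hq : Integrable q) (hq_top : MemLp q ∞) (k : ℂ) :
    ∃ u₁ u₂ : ℂ → ℂ, IsScattering q k u₁ u₂ ∧
      Tendsto u₁ (cocompact ℂ) (𝓝 1) ∧ Tendsto u₂ (cocompact ℂ) (𝓝 0) ∧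
      ∀ v₁ v₂ : ℂ → ℂ, IsScattering q k v₁ v₂ → v₁ = u₁ ∧ v₂ = u₂ := by
  have ha := isCauchyDensity_ek_mul ⟨hq, hq_top⟩ (-k)
  obtain ⟨u, hu, huniq⟩ := ha.existsUnique_eq_one_add_conjOperator_conjOperator
  refine ⟨u, ha.conjOperator u, (isScattering_iff ha).2 ⟨u, hu, rfl, rfl⟩, ?_,
    ha.tendsto_conjOperator_cocompact u, fun v₁ v₂ hv => ?_⟩
  · have hlim := (ha.tendsto_conjOperator_cocompact (ha.conjOperator u)).const_add 1
    rw [add_zero] at hlim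
    rw [hu]
    exact hlim
  · obtain ⟨v, hv', rfl, rfl⟩ := (isScattering_iff ha).1 hv
    rw [huniq v hv']
    exact ⟨rfl, rfl⟩

/-- Existence and uniqueness of the scattering solutions, together with their
behaviour at infinity. -/
theorem stmt13 (q : 𝓢(ℂ, ℂ)) (k : ℂ) :
    ∃ u₁ u₂ : ℂ → ℂ, IsScattering (⇑q) k u₁ u₂ ∧
      Tendsto u₁ (cocompact ℂ) (𝓝 1) ∧ Tendsto u₂ (cocompact ℂ) (𝓝 0) ∧
      ∀ v₁ v₂ : ℂ → ℂ, IsScattering (⇑q) k v₁ v₂ → v₁ = u₁ ∧ v₂ = u₂ :=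
  stmt13_general q.integrable (q.memLp_top volume) k
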